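/- arXiv:2202.02963 — 2 statements merged into one kernel-verified Lean document; each statement's English description precedes it below -/
import Mathlib

section
/- Let 1<p<∞ with conjugate exponent p′, let b > 1/p′, and let a ≥ 0. For T > 2 and a nonnegative measurable function g on (0,T), define G_a(t) = ∫₀^{t/2}(t−s)^{−a} g(s) ds for t ∈ (2,T). Then: (i) sup_{2<t<T} t^{a} G_a(t) ≤ 2^{a} C_{b,p} ‖⟨s⟩^b g‖_{L_p(0,T)}, where C_{b,p} = (∫₀^∞⟨s⟩^{−bp′} ds)^{1/p′}; and (ii) if moreover (a−b)p > 1, then ‖⟨t⟩^b G_a‖_{L_p(2,T)} ≤ C‖⟨s⟩^b g‖_{L_p(0,T)} with C depending only on a, b, p (not on T or g). -/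
open MeasureTheory Set ENNReal

lemma kb_pt (p p' b a : ℝ) (hp : 1 < p) (hconj : 1 / p + 1 / p' = 1) (ha : 0 ≤ a)
    (T : ℝ) (g : ℝ → ℝ≥0∞) (hg : Measurable g) (t : ℝ) (ht : t ∈ Ioo (2 : ℝ) T) :
    ENNReal.ofReal (t ^ a) *
          (∫⁻ s in Ioo 0 (t / 2), ENNReal.ofReal (t - s) ^ (-a) * g s) ≤
        ENNReal.ofReal (2 ^ a) *
          (∫⁻ s in Ioi (0 : ℝ),
              ENNReal.ofReal (Real.sqrt (1 + s ^ 2) ^ (-(b * p')))) ^ (1 / p') *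
          (∫⁻ s in Ioo (0 : ℝ) T,
              (ENNReal.ofReal (Real.sqrt (1 + s ^ 2) ^ b) * g s) ^ p) ^ (1 / p) := by
  obtain ⟨ht2, htT⟩ := ht
  have hpp : p.HolderConjugate p' := by
    rw [Real.holderConjugate_iff]
    exact ⟨hp, by simpa using hconj⟩
  have hsq : ∀ s : ℝ, 0 < Real.sqrt (1 + s ^ 2) := fun s => by positivity
  have h1 : ENNReal.ofReal (t ^ a) *
          (∫⁻ s in Ioo 0 (t / 2), ENNReal.ofReal (t - s) ^ (-a) * g s) ≤
        ENNReal.ofReal (2 ^ a) * ∫⁻ s in Ioo 0 T, g s := by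
    rw [← lintegral_const_mul' _ _ ENNReal.ofReal_ne_top,
      ← lintegral_const_mul' _ _ ENNReal.ofReal_ne_top]
    refine le_trans ?_ (lintegral_mono_set (Ioo_subset_Ioo_right (by linarith : t / 2 ≤ T)))
    refine setLIntegral_mono' measurableSet_Ioo ?_
    intro s hs
    have hts : 0 < t - s := by linarith [hs.2]
    rw [← mul_assoc]
    gcongr
    rw [ENNReal.ofReal_rpow_of_pos hts, ← ENNReal.ofReal_mul (by positivity)]
    apply ENNReal.ofReal_le_ofReal
    rw [Real.rpow_neg hts.le, ← div_eq_mul_inv, ← Real.div_rpow (by linarith) hts.le]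
    apply Real.rpow_le_rpow (by positivity) _ ha
    rw [div_le_iff₀ hts]
    linarith [hs.2]
  have h2 : ∫⁻ s in Ioo 0 T, g s ≤
      (∫⁻ s in Ioi (0 : ℝ),
              ENNReal.ofReal (Real.sqrt (1 + s ^ 2) ^ (-(b * p')))) ^ (1 / p') *
          (∫⁻ s in Ioo (0 : ℝ) T,
              (ENNReal.ofReal (Real.sqrt (1 + s ^ 2) ^ b) * g s) ^ p) ^ (1 / p) := by
    have := ENNReal.lintegral_mul_le_Lp_mul_Lq (volume.restrict (Ioo 0 T)) hpp.symm
      (f := fun s => ENNReal.ofReal (Real.sqrt (1 + s ^ 2) ^ (-b)))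
      (g := fun s => ENNReal.ofReal (Real.sqrt (1 + s ^ 2) ^ b) * g s)
      (by fun_prop) (by fun_prop)
    have e : (fun s => ENNReal.ofReal (Real.sqrt (1 + s ^ 2) ^ (-b))) *
        (fun s => ENNReal.ofReal (Real.sqrt (1 + s ^ 2) ^ b) * g s) = g := by
      ext s
      simp only [Pi.mul_apply]
      rw [← mul_assoc, ← ENNReal.ofReal_mul (by positivity), ← Real.rpow_add (hsq s)]
      simp
    rw [e] at this
    refine this.trans ?_
    gcongr ?_ ^ _ * _
    · have := hpp.symm.pos
      positivity
    refine le_trans (le_of_eq ?_) (lintegral_mono_set (Ioo_subset_Ioi_self (a := T)))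
    refine lintegral_congr fun s => ?_
    rw [ENNReal.ofReal_rpow_of_pos (Real.rpow_pos_of_pos (hsq s) _),
      ← Real.rpow_mul (hsq s).le, neg_mul]
  rw [mul_assoc]
  exact h1.trans (by gcongr)

lemma kb_fin (r : ℝ) (hr : 1 < r) :
    (∫⁻ s in Ioi (0 : ℝ), ENNReal.ofReal (Real.sqrt (1 + s ^ 2) ^ (-r))) ≠ ⊤ := by
  have h := integrable_rpow_neg_one_add_norm_sq (E := ℝ) (μ := volume) (r := r) (by simpa using hr)
  have h' := (h.integrableOn (s := Ioi (0:ℝ))).lintegral_lt_top.ne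
  convert h' using 4 with s
  rw [Real.sqrt_eq_rpow, ← Real.rpow_mul (by positivity)]
  simp
  congr 1
  ring

/-- bounds for G_a(t) = ∫₀^{t/2} (t-s)^{-a} g(s) ds on (2,T):
(i) sup_{2<t<T} t^a G_a(t) ≤ 2^a C_{b,p} ‖⟨s⟩^b g‖_{L_p(0,T)} with
C_{b,p} = (∫₀^∞ ⟨s⟩^{-bp′} ds)^{1/p′};
(ii) if (a-b)p > 1 then ‖⟨t⟩^b G_a‖_{L_p(2,T)} ≤ C ‖⟨s⟩^b g‖_{L_p(0,T)} with C = C(a,b,p). -/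
theorem kernel_bound_first_piece
    (p p' b a : ℝ) (hp : 1 < p) (hconj : 1 / p + 1 / p' = 1) (hb : 1 / p' < b) (ha : 0 ≤ a) :
    (∀ T : ℝ, 2 < T → ∀ g : ℝ → ℝ≥0∞, Measurable g →
      (⨆ t ∈ Ioo (2 : ℝ) T, ENNReal.ofReal (t ^ a) *
          ∫⁻ s in Ioo 0 (t / 2), ENNReal.ofReal (t - s) ^ (-a) * g s) ≤
        ENNReal.ofReal (2 ^ a) *
          (∫⁻ s in Ioi (0 : ℝ),
              ENNReal.ofReal (Real.sqrt (1 + s ^ 2) ^ (-(b * p')))) ^ (1 / p') *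
          (∫⁻ s in Ioo (0 : ℝ) T,
              (ENNReal.ofReal (Real.sqrt (1 + s ^ 2) ^ b) * g s) ^ p) ^ (1 / p)) ∧
    ((a - b) * p > 1 → ∃ C : ℝ≥0∞, C ≠ ⊤ ∧
      ∀ T : ℝ, 2 < T → ∀ g : ℝ → ℝ≥0∞, Measurable g →
        (∫⁻ t in Ioo (2 : ℝ) T,
            (ENNReal.ofReal (Real.sqrt (1 + t ^ 2) ^ b) *
              ∫⁻ s in Ioo 0 (t / 2), ENNReal.ofReal (t - s) ^ (-a) * g s) ^ p) ^ (1 / p) ≤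
          C * (∫⁻ s in Ioo (0 : ℝ) T,
              (ENNReal.ofReal (Real.sqrt (1 + s ^ 2) ^ b) * g s) ^ p) ^ (1 / p)) := by
  refine ⟨fun T _ g hg => iSup₂_le fun t ht => kb_pt p p' b a hp hconj ha T g hg t ht, ?_⟩
  intro hab
  have hpp : p.HolderConjugate p' := by
    rw [Real.holderConjugate_iff]
    exact ⟨hp, by simpa using hconj⟩
  have hp' := hpp.symm.pos
  have hp0 := hpp.pos
  have hb0 : 0 < b := lt_trans (by positivity) hb
  have hK := kb_fin (b * p') (by rwa [div_lt_iff₀ hp'] at hb)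
  set K := (∫⁻ s in Ioi (0 : ℝ), ENNReal.ofReal (Real.sqrt (1 + s ^ 2) ^ (-(b * p')))) with hKdef
  have hJ : (∫⁻ t in Ioi (2 : ℝ), ENNReal.ofReal (t ^ ((b - a) * p))) ≠ ⊤ :=
    (integrableOn_Ioi_rpow_of_lt (a := (b - a) * p) (by linarith)
      (by norm_num : (0:ℝ) < 2)).lintegral_lt_top.ne
  set J := (∫⁻ t in Ioi (2 : ℝ), ENNReal.ofReal (t ^ ((b - a) * p))) with hJdef
  refine ⟨J ^ (1 / p) * (ENNReal.ofReal (2 ^ b) * (ENNReal.ofReal (2 ^ a) * K ^ (1 / p'))),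
    ?_, ?_⟩
  · refine ENNReal.mul_ne_top (ENNReal.rpow_ne_top_of_nonneg (by positivity) hJ)
      (ENNReal.mul_ne_top ENNReal.ofReal_ne_top (ENNReal.mul_ne_top ENNReal.ofReal_ne_top
        (ENNReal.rpow_ne_top_of_nonneg (by positivity) hK)))
  intro T hT g hg
  have key := kb_pt p p' b a hp hconj ha T g hg
  rw [← hKdef] at key
  set N := (∫⁻ s in Ioo (0 : ℝ) T,
    (ENNReal.ofReal (Real.sqrt (1 + s ^ 2) ^ b) * g s) ^ p) ^ (1 / p) with hN
  set M := ENNReal.ofReal (2 ^ b) * (ENNReal.ofReal (2 ^ a) * K ^ (1 / p') * N) with hM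
  have hmain : (∫⁻ t in Ioo (2 : ℝ) T,
            (ENNReal.ofReal (Real.sqrt (1 + t ^ 2) ^ b) *
              ∫⁻ s in Ioo 0 (t / 2), ENNReal.ofReal (t - s) ^ (-a) * g s) ^ p) ≤ J * M ^ p := by
    rw [hJdef, ← lintegral_mul_const _ (by fun_prop)]
    refine le_trans ?_ (lintegral_mono_set (Ioo_subset_Ioi_self (a := T)))
    refine setLIntegral_mono' measurableSet_Ioo ?_
    intro t ht
    have ht0 : 0 < t := by linarith [ht.1]
    have hw : Real.sqrt (1 + t ^ 2) ^ b ≤ t ^ (b - a) * 2 ^ b * t ^ a := by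
      have : t ^ (b - a) * 2 ^ b * t ^ a = (2 * t) ^ b := by
        rw [Real.mul_rpow (by norm_num) ht0.le, mul_right_comm, ← Real.rpow_add ht0]
        simp [mul_comm]
      rw [this]
      refine Real.rpow_le_rpow (by positivity) ?_ hb0.le
      rw [Real.sqrt_le_left (by positivity)]
      nlinarith [ht.1]
    have e : ENNReal.ofReal (t ^ ((b - a) * p)) = ENNReal.ofReal (t ^ (b - a)) ^ p := by
      rw [ENNReal.ofReal_rpow_of_pos (by positivity), ← Real.rpow_mul ht0.le]
    rw [e, ← ENNReal.mul_rpow_of_nonneg _ _ hp0.le]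
    refine ENNReal.rpow_le_rpow ?_ hp0.le
    refine (mul_le_mul_left (ENNReal.ofReal_le_ofReal hw) _).trans ?_
    rw [ENNReal.ofReal_mul (by positivity), ENNReal.ofReal_mul (by positivity), mul_assoc,
      mul_assoc, hM]
    refine mul_le_mul_right (mul_le_mul_right ?_ _) _
    exact key t ht
  refine (ENNReal.rpow_le_rpow hmain (by positivity)).trans (le_of_eq ?_)
  rw [ENNReal.mul_rpow_of_nonneg _ _ (by positivity), ← ENNReal.rpow_mul,
    mul_one_div_cancel hp0.ne', ENNReal.rpow_one, hM]
  ring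
end

section
/- Let 1<p<∞, b ≥ 0 and a > 1. For T > 2 and a nonnegative measurable function h on (0,T), define H(t) = ∫_{t/2}^{t−1}(t−s)^{−a} h(s) ds for t ∈ (2,T). Then ‖⟨t⟩^b H‖_{L_p(2,T)} ≤ C‖⟨s⟩^b h‖_{L_p(0,T)}, where C depends only on a, b and p (not on T or h). -/
open MeasureTheory Set ENNReal

/-- The truncated kernel. -/
noncomputable def kerK (a : ℝ) : ℝ → ℝ≥0∞ :=
  (Ioi (1 : ℝ)).indicator (fun u => ENNReal.ofReal u ^ (-a))

theorem kerK_meas (a : ℝ) : Measurable (kerK a) := by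
  unfold kerK
  exact Measurable.indicator (by fun_prop) measurableSet_Ioi

theorem kerK_fin (a : ℝ) (ha : 1 < a) : ∫⁻ u, kerK a u ≠ ⊤ := by
  unfold kerK
  rw [lintegral_indicator measurableSet_Ioi]
  have h1 : IntegrableOn (fun u : ℝ => u ^ (-a)) (Ioi 1) :=
    integrableOn_Ioi_rpow_of_lt (by linarith) one_pos
  have h2 := h1.lintegral_lt_top
  refine ne_of_lt (lt_of_eq_of_lt ?_ h2)
  refine setLIntegral_congr_fun measurableSet_Ioi ?_
  intro u hu
  exact ENNReal.ofReal_rpow_of_pos (lt_trans one_pos hu)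

theorem young_pt (p : ℝ) (hp : 1 < p) (k g : ℝ → ℝ≥0∞) (hk : Measurable k)
    (hg : Measurable g) :
    (∫⁻ s, k s * g s) ^ p ≤ (∫⁻ s, k s) ^ (p - 1) * ∫⁻ s, k s * g s ^ p := by
  have hp0 : 0 < p := by linarith
  have hq := Real.HolderConjugate.conjExponent hp
  set q := p.conjExponent with hqd
  have hq0 : 0 < q := hq.symm.pos
  have h := ENNReal.lintegral_mul_le_Lp_mul_Lq volume hq.symm
    (f := fun s => k s ^ (1 / q)) (g := fun s => k s ^ (1 / p) * g s)
    (by fun_prop) (by fun_prop)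
  have e0 : ∀ s, k s ^ (1 / q) * (k s ^ (1 / p) * g s) = k s * g s := by
    intro s
    rw [← mul_assoc, ← ENNReal.rpow_add_of_nonneg _ _ (by positivity) (by positivity)]
    have : 1 / q + 1 / p = 1 := by
      have := hq.inv_add_inv_eq_one
      simp only [one_div]; linarith
    rw [this, ENNReal.rpow_one]
  have e1 : ∀ s, (k s ^ (1 / q)) ^ q = k s := by
    intro s
    rw [← ENNReal.rpow_mul, one_div_mul_cancel hq0.ne', ENNReal.rpow_one]
  have e2 : ∀ s, (k s ^ (1 / p) * g s) ^ p = k s * g s ^ p := by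
    intro s
    rw [ENNReal.mul_rpow_of_nonneg _ _ hp0.le, ← ENNReal.rpow_mul,
      one_div_mul_cancel hp0.ne', ENNReal.rpow_one]
  simp only [Pi.mul_apply, e0, e1, e2] at h
  refine (ENNReal.rpow_le_rpow h hp0.le).trans (le_of_eq ?_)
  rw [ENNReal.mul_rpow_of_nonneg _ _ hp0.le, ← ENNReal.rpow_mul, ← ENNReal.rpow_mul,
      one_div_mul_cancel hp0.ne', ENNReal.rpow_one]
  have : 1 / q * p = p - 1 := by
    rw [hqd, Real.conjExponent]
    have : p - 1 ≠ 0 := by linarith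
    field_simp
  rw [this]

theorem young_conv (p : ℝ) (hp : 1 < p) (k g : ℝ → ℝ≥0∞) (hk : Measurable k)
    (hg : Measurable g) :
    ∫⁻ t, (∫⁻ s, k (t - s) * g s) ^ p ≤ (∫⁻ s, k s) ^ p * ∫⁻ s, g s ^ p := by
  have hm : Measurable (Function.uncurry fun t s : ℝ => k (t - s) * g s ^ p) := by
    unfold Function.uncurry
    fun_prop
  calc ∫⁻ t, (∫⁻ s, k (t - s) * g s) ^ p
      ≤ ∫⁻ t, (∫⁻ s, k s) ^ (p - 1) * ∫⁻ s, k (t - s) * g s ^ p := by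
        refine lintegral_mono fun t => ?_
        have := young_pt p hp (fun s => k (t - s)) g (by fun_prop) hg
        rwa [lintegral_sub_left_eq_self k t] at this
    _ = (∫⁻ s, k s) ^ (p - 1) * ∫⁻ s, ∫⁻ t, k (t - s) * g s ^ p := by
        rw [lintegral_const_mul _ hm.lintegral_prod_right, lintegral_lintegral_swap hm.aemeasurable]
    _ = (∫⁻ s, k s) ^ (p - 1) * ((∫⁻ s, k s) * ∫⁻ s, g s ^ p) := by
        congr 1
        rw [← lintegral_const_mul _ (by fun_prop)]
        refine lintegral_congr fun s => ?_
        rw [lintegral_mul_const _ (by fun_prop), lintegral_sub_right_eq_self k s]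
    _ = (∫⁻ s, k s) ^ p * ∫⁻ s, g s ^ p := by
        rw [← mul_assoc]
        congr 1
        nth_rewrite 2 [← ENNReal.rpow_one (∫⁻ s, k s)]
        rw [← ENNReal.rpow_add_of_nonneg _ _ (by linarith) zero_le_one]
        congr 1; ring

/-- for 1<p<∞, b ≥ 0 and a > 1, the operator
H(t) = ∫_{t/2}^{t-1} (t-s)^{-a} h(s) ds satisfies
‖⟨t⟩^b H‖_{L_p(2,T)} ≤ C ‖⟨s⟩^b h‖_{L_p(0,T)} with C depending only on a, b, p. -/
theorem kernel_bound_middle_piece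
    (p b a : ℝ) (hp : 1 < p) (hb : 0 ≤ b) (ha : 1 < a) :
    ∃ C : ℝ≥0∞, C ≠ ⊤ ∧
      ∀ T : ℝ, 2 < T → ∀ h : ℝ → ℝ≥0∞, Measurable h →
        (∫⁻ t in Ioo (2 : ℝ) T,
            (ENNReal.ofReal (Real.sqrt (1 + t ^ 2) ^ b) *
              ∫⁻ s in Ioo (t / 2) (t - 1), ENNReal.ofReal (t - s) ^ (-a) * h s) ^ p) ^ (1 / p) ≤
          C * (∫⁻ s in Ioo (0 : ℝ) T,
              (ENNReal.ofReal (Real.sqrt (1 + s ^ 2) ^ b) * h s) ^ p) ^ (1 / p) := by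
  have hp0 : 0 < p := by linarith
  refine ⟨ENNReal.ofReal (2 ^ b) * ∫⁻ u, kerK a u,
    ENNReal.mul_ne_top ENNReal.ofReal_ne_top (kerK_fin a ha), ?_⟩
  intro T hT h hh
  set w : ℝ → ℝ≥0∞ := fun s => ENNReal.ofReal (Real.sqrt (1 + s ^ 2) ^ b) with hw
  have hwm : Measurable w := by
    refine ENNReal.measurable_ofReal.comp (Measurable.pow_const ?_ b)
    fun_prop
  set g : ℝ → ℝ≥0∞ := (Ioo (0 : ℝ) T).indicator (fun s => w s * h s) with hg
  have hgm : Measurable g := (hwm.mul hh).indicator measurableSet_Ioo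
  have hgp : ∫⁻ s, g s ^ p = ∫⁻ s in Ioo (0 : ℝ) T, (w s * h s) ^ p := by
    rw [← lintegral_indicator measurableSet_Ioo]
    refine lintegral_congr fun s => ?_
    by_cases hs : s ∈ Ioo (0 : ℝ) T
    · simp [hg, hs]
    · simp [hg, hs, hp0]
  have hpt : ∀ t ∈ Ioo (2 : ℝ) T,
      w t * ∫⁻ s in Ioo (t / 2) (t - 1), ENNReal.ofReal (t - s) ^ (-a) * h s
        ≤ ENNReal.ofReal (2 ^ b) * ∫⁻ s, kerK a (t - s) * g s := by
    intro t ht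
    have hm1 : Measurable fun s => ENNReal.ofReal (t - s) ^ (-a) * h s := by fun_prop
    have hkm := kerK_meas a
    rw [← lintegral_indicator measurableSet_Ioo,
      ← lintegral_const_mul _ (hm1.indicator measurableSet_Ioo),
      ← lintegral_const_mul _ (by fun_prop)]
    refine lintegral_mono fun s => ?_
    by_cases hs : s ∈ Ioo (t / 2) (t - 1)
    · have hs0 : s ∈ Ioo (0 : ℝ) T := ⟨by linarith [hs.1, ht.1], by linarith [hs.2, ht.2]⟩
      have hts : t - s ∈ Ioi (1 : ℝ) := by
        have := hs.2
        simp only [mem_Ioi]; linarith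
      have hwle : w t ≤ ENNReal.ofReal (2 ^ b) * w s := by
        simp only [hw]
        rw [← ENNReal.ofReal_mul (by positivity), ← Real.mul_rpow (by norm_num) (by positivity)]
        refine ENNReal.ofReal_le_ofReal (Real.rpow_le_rpow (by positivity) ?_ hb)
        rw [Real.sqrt_le_left (by positivity), mul_pow, Real.sq_sqrt (by positivity)]
        nlinarith [hs.1, hs0.1, ht.1]
      simp only [indicator_of_mem hs, hg, indicator_of_mem hs0, kerK, indicator_of_mem hts]
      calc _ ≤ (ENNReal.ofReal (2 ^ b) * w s) * (ENNReal.ofReal (t - s) ^ (-a) * h s) := by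
            gcongr
        _ = _ := by ring
    · simp [indicator_of_notMem hs]
  calc _ ≤ (∫⁻ t, (ENNReal.ofReal (2 ^ b) * ∫⁻ s, kerK a (t - s) * g s) ^ p) ^ (1 / p) := by
        refine ENNReal.rpow_le_rpow ?_ (by positivity)
        refine (setLIntegral_mono' measurableSet_Ioo fun t ht =>
          ENNReal.rpow_le_rpow (hpt t ht) hp0.le).trans (setLIntegral_le_lintegral _ _)
    _ ≤ ((ENNReal.ofReal (2 ^ b)) ^ p * ((∫⁻ u, kerK a u) ^ p * ∫⁻ s, g s ^ p)) ^ (1 / p) := by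
        refine ENNReal.rpow_le_rpow ?_ (by positivity)
        simp only [ENNReal.mul_rpow_of_nonneg _ _ hp0.le]
        rw [lintegral_const_mul' _ _ (ENNReal.rpow_ne_top_of_nonneg hp0.le ENNReal.ofReal_ne_top)]
        gcongr
        exact young_conv p hp _ g (kerK_meas a) hgm
    _ = _ := by
        rw [ENNReal.mul_rpow_of_nonneg _ _ (by positivity),
          ENNReal.mul_rpow_of_nonneg _ _ (by positivity), ← ENNReal.rpow_mul, ← ENNReal.rpow_mul,
          mul_one_div_cancel hp0.ne', ENNReal.rpow_one, ENNReal.rpow_one, hgp, mul_assoc]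
end
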